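/- Let f : ℝ⁺ → ℂ be smooth with compact support in (0,∞). Then the quantity −2(γ + log(2π)) f(1) − ∫₁^∞ f(u) du/u − ∫₁^∞ (f(u) − f(1))/(u−1) · du/u − ∫₀¹ f(u) du − ∫₀¹ (u f(u) − f(1))/(1−u) du equals (1/2πi) ∫_{σ−i∞}^{σ+i∞} M^s(f) · (−2(γ+log 2π) − 1/s − 1/(1−s) + ∑_{n≥1}(1/n − 1/(n+s)) + ∑_{n≥1}(1/n − 1/(n+1−s))) ds for 0 < σ < 1, where M^s(f) = ∫₀^∞ f(x) x^{s−1} dx and γ is the Euler–Mascheroni constant. -/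

import Mathlib

open Complex MeasureTheory Set Filter Topology
open scoped FourierTransform SchwartzMap ContDiff

namespace CPlace

/-- The Mellin transform on a vertical line is a rescaled Schwartz function. -/
lemma exists_schwartz (f : ℝ → ℂ) (hf : ContDiff ℝ (⊤ : ℕ∞) f) (hsupp : HasCompactSupport f)
    (hpos : tsupport f ⊆ Set.Ioi 0) (σ : ℝ) :
    ∃ G : 𝓢(ℝ, ℂ), ∀ t : ℝ, mellin f ((σ : ℂ) + t * I) = G (t / (2 * Real.pi)) := by
  have h1 : HasCompactSupport (fun u : ℝ => Real.exp (-σ * u) • f (Real.exp (-u))) := by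
    have hK : IsCompact ((fun x => -Real.log x) '' tsupport f) := by
      apply IsCompact.image_of_continuousOn hsupp
      apply ContinuousOn.neg
      apply Real.continuousOn_log.mono
      intro x hx
      have := hpos hx
      simp only [Set.mem_Ioi] at this
      simp [this.ne']
    apply HasCompactSupport.intro hK
    intro x hx
    have : f (Real.exp (-x)) = 0 := by
      apply image_eq_zero_of_notMem_tsupport
      intro h
      exact hx ⟨_, h, by simp⟩
    simp [this]
  have h2 : ContDiff ℝ ∞ (fun u : ℝ => Real.exp (-σ * u) • f (Real.exp (-u))) := by
    exact ContDiff.smul (f := fun u : ℝ => Real.exp (-σ * u)) (g := fun u : ℝ => f (Real.exp (-u)))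
      (by fun_prop) (hf.comp (by fun_prop))
  refine ⟨𝓕 (h1.toSchwartzMap h2), fun t => ?_⟩
  rw [mellin_eq_fourier, SchwartzMap.fourier_coe]
  simp
  rfl

lemma mellin_cont (f : ℝ → ℂ) (hf : ContDiff ℝ (⊤ : ℕ∞) f) (hsupp : HasCompactSupport f)
    (hpos : tsupport f ⊆ Set.Ioi 0) (σ : ℝ) :
    Continuous (fun t : ℝ => mellin f ((σ : ℂ) + t * I)) := by
  obtain ⟨G, hG⟩ := exists_schwartz f hf hsupp hpos σ
  simp_rw [hG]
  exact G.continuous.comp (by fun_prop)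

lemma mellin_int (f : ℝ → ℂ) (hf : ContDiff ℝ (⊤ : ℕ∞) f) (hsupp : HasCompactSupport f)
    (hpos : tsupport f ⊆ Set.Ioi 0) (σ : ℝ) :
    Integrable (fun t : ℝ => mellin f ((σ : ℂ) + t * I)) := by
  obtain ⟨G, hG⟩ := exists_schwartz f hf hsupp hpos σ
  simp_rw [hG]
  exact G.integrable.comp_div (by positivity)

lemma mellin_int_mul (f : ℝ → ℂ) (hf : ContDiff ℝ (⊤ : ℕ∞) f) (hsupp : HasCompactSupport f)
    (hpos : tsupport f ⊆ Set.Ioi 0) (σ : ℝ) (C : ℝ) :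
    Integrable (fun t : ℝ => ‖mellin f ((σ : ℂ) + t * I)‖ * (C + |t|)) := by
  have h0 := (mellin_int f hf hsupp hpos σ).norm.mul_const C
  simp_rw [mul_add]
  apply h0.add
  obtain ⟨G, hG⟩ := exists_schwartz f hf hsupp hpos σ
  simp_rw [hG]
  have h := ((G.integrable_pow_mul volume 1).comp_div
    (show (2 * Real.pi) ≠ 0 by positivity)).const_mul (2 * Real.pi)
  refine h.congr (ae_of_all _ fun t => ?_)
  simp only [pow_one, Real.norm_eq_abs, abs_div]
  rw [abs_of_pos (show (0 : ℝ) < 2 * Real.pi by positivity)]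
  have := Real.pi_pos.ne'
  field_simp

lemma inv_formula (f : ℝ → ℂ) (hf : ContDiff ℝ (⊤ : ℕ∞) f) (hsupp : HasCompactSupport f)
    (hpos : tsupport f ⊆ Set.Ioi 0) (σ : ℝ) {x : ℝ} (hx : 0 < x) :
    (1 / (2 * (Real.pi : ℂ))) * ∫ t : ℝ, mellin f ((σ : ℂ) + t * I) * (x : ℂ) ^ (-((σ : ℂ) + t * I))
      = f x := by
  have hc : MellinConvergent f σ := by
    apply mellinConvergent_of_isBigO_rpow (a := σ + 1) (b := σ - 1)
    · exact (hf.continuous.locallyIntegrable).locallyIntegrableOn _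
    · have : f =ᶠ[atTop] 0 := by
        have := hsupp.eq_zero_or_finiteDimensional ℝ
        have h := hasCompactSupport_iff_eventuallyEq.mp hsupp
        exact h.filter_mono (by rw [← Filter.coclosedCompact_eq_cocompact.symm]; exact atTop_le_cocompact)
      exact this.trans_isBigO (Asymptotics.isBigO_zero _ _)
    · simp
    · have : f =ᶠ[𝓝 0] 0 := by
        apply notMem_tsupport_iff_eventuallyEq.mp
        intro h
        simpa using hpos h
      exact (this.filter_mono nhdsWithin_le_nhds).trans_isBigO (Asymptotics.isBigO_zero _ _)
    · simp
  have := mellinInv_mellin_eq σ f hx hc (mellin_int f hf hsupp hpos σ) hf.continuous.continuousAt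
  rw [← this, mellinInv, Complex.real_smul]
  push_cast
  congr 2
  ext t
  rw [smul_eq_mul, mul_comm]

lemma inv_one (f : ℝ → ℂ) (hf : ContDiff ℝ (⊤ : ℕ∞) f) (hsupp : HasCompactSupport f)
    (hpos : tsupport f ⊆ Set.Ioi 0) (σ : ℝ) :
    (1 / (2 * (Real.pi : ℂ))) * ∫ t : ℝ, mellin f ((σ : ℂ) + t * I) = f 1 := by
  have := inv_formula f hf hsupp hpos σ (x := 1) one_pos
  simpa using this

/-- `1/(n+s)` term -/
lemma termA (f : ℝ → ℂ) (hf : ContDiff ℝ (⊤ : ℕ∞) f) (hsupp : HasCompactSupport f)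
    (hpos : tsupport f ⊆ Set.Ioi 0) (σ : ℝ) (hσ : 0 < σ) (n : ℕ) :
    (1 / (2 * (Real.pi : ℂ))) * ∫ t : ℝ, mellin f ((σ : ℂ) + t * I) * (1 / ((n : ℂ) + (σ + t * I)))
      = ∫ u in Ioi (1 : ℝ), f u / (u : ℂ) ^ (n + 1) := by
  have hfub : Integrable (Function.uncurry fun (t u : ℝ) =>
      mellin f ((σ : ℂ) + t * I) * (u : ℂ) ^ (-((n : ℂ) + 1 + (σ + t * I))))
      ((volume : Measure ℝ).prod (volume.restrict (Ioi (1 : ℝ)))) := by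
    have hb := (mellin_int f hf hsupp hpos σ).norm.mul_prod
      (integrableOn_Ioi_rpow_of_lt (a := -(n + 1 + σ)) (by have : (0:ℝ) ≤ n := n.cast_nonneg; linarith) (c := 1) one_pos)
    refine hb.mono' ?_ ?_
    · apply Measurable.aestronglyMeasurable
      have hm := (mellin_cont f hf hsupp hpos σ).measurable
      apply Measurable.mul (hm.comp measurable_fst)
      apply Measurable.pow <;> fun_prop
    · have : ∀ᵐ z : ℝ × ℝ ∂((volume : Measure ℝ).prod (volume.restrict (Ioi (1 : ℝ)))), z.2 ∈ Ioi (1:ℝ) :=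
        Measure.quasiMeasurePreserving_snd.ae (ae_restrict_mem measurableSet_Ioi)
      filter_upwards [this] with z hz
      have hz0 : 0 < z.2 := lt_trans one_pos hz
      simp only [Function.uncurry, norm_mul]
      rw [Complex.norm_cpow_eq_rpow_re_of_pos hz0]
      simp
  have h1 : ∀ t : ℝ, mellin f ((σ : ℂ) + t * I) * (1 / ((n : ℂ) + (σ + t * I)))
      = ∫ u in Ioi (1 : ℝ), mellin f ((σ : ℂ) + t * I) * (u : ℂ) ^ (-((n : ℂ) + 1 + (σ + t * I))) := by
    intro t
    rw [integral_const_mul, integral_Ioi_cpow_of_lt _ one_pos]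
    · have : -((n : ℂ) + 1 + (σ + t * I)) + 1 = -((n : ℂ) + (σ + t * I)) := by ring
      rw [this]
      simp only [ofReal_one, one_cpow, neg_div_neg_eq]
    · have : (0:ℝ) ≤ n := n.cast_nonneg
      simp; linarith
  simp_rw [h1]
  rw [integral_integral_swap hfub, ← integral_const_mul]
  apply setIntegral_congr_fun measurableSet_Ioi
  intro u hu
  have hu0 : 0 < u := lt_trans one_pos hu
  have hu0' : (u : ℂ) ≠ 0 := by exact_mod_cast hu0.ne'
  simp only
  rw [← inv_formula f hf hsupp hpos σ hu0, mul_div_assoc, ← integral_div]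
  congr 2
  ext t
  rw [mul_div_assoc]
  congr 1
  rw [neg_add, cpow_add _ _ hu0', mul_comm, cpow_neg _ ((n:ℂ)+1), div_eq_mul_inv]
  congr 2
  exact_mod_cast cpow_natCast (u:ℂ) (n+1)

/-- `1/(n+1-s)` term -/
lemma termB (f : ℝ → ℂ) (hf : ContDiff ℝ (⊤ : ℕ∞) f) (hsupp : HasCompactSupport f)
    (hpos : tsupport f ⊆ Set.Ioi 0) (σ : ℝ) (hσ : σ < 1) (n : ℕ) :
    (1 / (2 * (Real.pi : ℂ))) * ∫ t : ℝ, mellin f ((σ : ℂ) + t * I) * (1 / ((n : ℂ) + 1 - (σ + t * I)))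
      = ∫ u in Ioo (0 : ℝ) 1, (u : ℂ) ^ n * f u := by
  have hn : (0:ℝ) ≤ n := n.cast_nonneg
  have hfub : Integrable (Function.uncurry fun (t u : ℝ) =>
      mellin f ((σ : ℂ) + t * I) * (u : ℂ) ^ ((n : ℂ) - (σ + t * I)))
      ((volume : Measure ℝ).prod (volume.restrict (Ioo (0 : ℝ) 1))) := by
    have hb := (mellin_int f hf hsupp hpos σ).norm.mul_prod
      ((intervalIntegral.integrableOn_Ioo_rpow_iff (s := n - σ) one_pos).2 (by linarith))
    refine hb.mono' ?_ ?_
    · apply Measurable.aestronglyMeasurable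
      have hm := (mellin_cont f hf hsupp hpos σ).measurable
      apply Measurable.mul (hm.comp measurable_fst)
      apply Measurable.pow <;> fun_prop
    · have : ∀ᵐ z : ℝ × ℝ ∂((volume : Measure ℝ).prod (volume.restrict (Ioo (0 : ℝ) 1))), z.2 ∈ Ioo (0:ℝ) 1 :=
        Measure.quasiMeasurePreserving_snd.ae (ae_restrict_mem measurableSet_Ioo)
      filter_upwards [this] with z hz
      have hz0 : 0 < z.2 := hz.1
      simp only [Function.uncurry, norm_mul]
      rw [Complex.norm_cpow_eq_rpow_re_of_pos hz0]
      simp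
  have h1 : ∀ t : ℝ, mellin f ((σ : ℂ) + t * I) * (1 / ((n : ℂ) + 1 - (σ + t * I)))
      = ∫ u in Ioo (0 : ℝ) 1, mellin f ((σ : ℂ) + t * I) * (u : ℂ) ^ ((n : ℂ) - (σ + t * I)) := by
    intro t
    rw [integral_const_mul, ← integral_Ioc_eq_integral_Ioo,
      ← intervalIntegral.integral_of_le zero_le_one, integral_cpow]
    · have : ((n : ℂ) - (σ + t * I)) + 1 = ((n : ℂ) + 1 - (σ + t * I)) := by ring
      rw [this]
      have h0 : ((n : ℂ) + 1 - (σ + t * I)) ≠ 0 := by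
        intro h
        have := congrArg Complex.re h
        simp at this
        linarith
      simp only [ofReal_one, one_cpow, ofReal_zero, zero_cpow h0, sub_zero]
    · left
      simp; linarith
  simp_rw [h1]
  rw [integral_integral_swap hfub, ← integral_const_mul]
  apply setIntegral_congr_fun measurableSet_Ioo
  intro u hu
  have hu0 : 0 < u := hu.1
  have hu0' : (u : ℂ) ≠ 0 := by exact_mod_cast hu0.ne'
  simp only
  rw [← inv_formula f hf hsupp hpos σ hu0, mul_left_comm, ← integral_const_mul ((u : ℂ) ^ n)]
  congr 1
  apply integral_congr_ae
  refine ae_of_all _ fun t => ?_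
  simp only
  rw [sub_eq_add_neg, cpow_add _ _ hu0', cpow_natCast]
  ring

lemma hs_congr {a b : ℕ → ℝ} {x y : ℝ} (h : HasSum a x) (h1 : ∀ n, b n = a n) (h2 : y = x) :
    HasSum b y := by
  rw [h2, funext h1]; exact h

lemma hs_congrC {a b : ℕ → ℂ} {x y : ℂ} (h : HasSum a x) (h1 : ∀ n, b n = a n) (h2 : y = x) :
    HasSum b y := by
  rw [h2, funext h1]; exact h

lemma split_int {a b c d e : ℝ → ℂ} (ha : Integrable a) (hb : Integrable b) (hc : Integrable c)
    (hd : Integrable d) (he : Integrable e) :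
    ∫ t, (a t - b t - c t + d t + e t) = (∫ t, a t) - (∫ t, b t) - (∫ t, c t) + (∫ t, d t) + ∫ t, e t := by
  have h1 : Integrable (fun t => a t - b t) := ha.sub hb
  have h2 : Integrable (fun t => a t - b t - c t) := h1.sub hc
  have h3 : Integrable (fun t => a t - b t - c t + d t) := h2.add hd
  rw [integral_add h3 he, integral_add h2 hd, integral_sub h1 hc, integral_sub ha hb]

lemma sumlem (M : ℝ → ℂ) (hM : Continuous M)
    (hint : Integrable (fun t : ℝ => ‖M t‖ * (1 + |t|))) (q : ℕ → ℝ → ℂ)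
    (hq : ∀ n, Continuous (q n)) (hb : ∀ n t, ‖q n t‖ ≤ (1 + |t|) / ((n : ℝ) + 1) ^ 2) :
    Integrable (fun t => M t * ∑' n, q n t) ∧
      HasSum (fun n => ∫ t, M t * q n t) (∫ t, M t * ∑' n, q n t) := by
  have hs : Summable (fun n : ℕ => 1 / ((n : ℝ) + 1) ^ 2) := by
    have := (summable_nat_add_iff 1).2 (Real.summable_one_div_nat_pow.2 (one_lt_two))
    simpa using this
  have hs' : ∀ t : ℝ, Summable (fun n : ℕ => (1 + |t|) / ((n : ℝ) + 1) ^ 2) := by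
    intro t
    simpa [div_eq_mul_inv] using hs.mul_left (1 + |t|)
  have hqs : ∀ t, Summable (fun n => q n t) := fun t =>
    Summable.of_norm_bounded (hs' t) (fun n => hb n t)
  have hH : ∀ t, HasSum (fun n => M t * q n t) (M t * ∑' n, q n t) := fun t =>
    (hqs t).hasSum.mul_left _
  constructor
  · refine (hint.mul_const (∑' n : ℕ, 1 / ((n : ℝ) + 1) ^ 2)).mono' ?_ ?_
    · refine aestronglyMeasurable_of_tendsto_ae atTop
        (f := fun (k : ℕ) t => ∑ n ∈ Finset.range k, M t * q n t) ?_
        (ae_of_all _ fun t => (hH t).tendsto_sum_nat)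
      intro k
      apply Continuous.aestronglyMeasurable
      exact continuous_finsetSum _ fun n _ => hM.mul (hq n)
    · refine ae_of_all _ fun t => ?_
      rw [norm_mul, mul_assoc]
      refine mul_le_mul_of_nonneg_left ?_ (norm_nonneg _)
      refine tsum_of_norm_bounded ?_ (fun n => hb n t)
      have := hs.hasSum.mul_left (1 + |t|)
      simpa only [mul_one_div] using this
  · refine hasSum_integral_of_dominated_convergence
      (fun n t => ‖M t‖ * (1 + |t|) * (1 / ((n : ℝ) + 1) ^ 2)) ?_ ?_ ?_ ?_ ?_
    · intro n
      exact (hM.mul (hq n)).aestronglyMeasurable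
    · intro n
      refine ae_of_all _ fun t => ?_
      rw [norm_mul, mul_assoc, mul_one_div]
      exact mul_le_mul_of_nonneg_left (hb n t) (norm_nonneg _)
    · exact ae_of_all _ fun t => hs.mul_left _
    · simp_rw [tsum_mul_left]
      exact hint.mul_const _
    · exact ae_of_all _ hH

lemma qbound (n : ℕ) (w : ℂ) (hw : 0 < w.re) :
    ‖1 / ((n : ℂ) + 1) - 1 / ((n : ℂ) + 1 + w)‖ ≤ ‖w‖ / ((n : ℝ) + 1) ^ 2 := by
  have hn : (0 : ℝ) < (n : ℝ) + 1 := by positivity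
  have h1 : ((n : ℂ) + 1) ≠ 0 := by exact_mod_cast hn.ne'
  have hre : (n : ℝ) + 1 ≤ ‖(n : ℂ) + 1 + w‖ := by
    refine le_trans ?_ (Complex.re_le_norm _)
    simp; exact hw.le
  have h2 : ((n : ℂ) + 1 + w) ≠ 0 := by
    rw [← norm_pos_iff]; linarith
  have : 1 / ((n : ℂ) + 1) - 1 / ((n : ℂ) + 1 + w) = w / (((n : ℂ) + 1) * ((n : ℂ) + 1 + w)) := by
    field_simp
    ring
  rw [this, norm_div, norm_mul]
  have h3 : ‖(n : ℂ) + 1‖ = (n : ℝ) + 1 := by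
    have : ((n : ℂ) + 1) = (((n : ℝ) + 1 : ℝ) : ℂ) := by push_cast; rfl
    rw [this, Complex.norm_of_nonneg hn.le]
  rw [h3, sq]
  gcongr

lemma intInv (M : ℝ → ℂ) (hM : Integrable M) (w : ℝ → ℂ) (hw : Continuous w) (c : ℝ) (hc : 0 < c)
    (hcw : ∀ t, c ≤ (w t).re) : Integrable (fun t => M t * (1 / w t)) := by
  have h0 : ∀ t, c ≤ ‖w t‖ := fun t => (hcw t).trans (Complex.re_le_norm _)
  refine hM.mul_bdd (c := 1 / c) ?_ ?_
  · apply Continuous.aestronglyMeasurable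
    refine continuous_const.div hw fun t => ?_
    rw [← norm_pos_iff]; linarith [h0 t]
  · refine ae_of_all _ fun t => ?_
    rw [norm_div, norm_one]
    exact one_div_le_one_div_of_le hc (h0 t)

lemma realA (f : ℝ → ℂ) (hf : ContDiff ℝ (⊤ : ℕ∞) f) (hsupp : HasCompactSupport f) :
    (∀ n : ℕ, IntegrableOn (fun u : ℝ => (u : ℂ) ^ (-((n : ℂ) + 2))) (Ioi 1)) ∧
    HasSum (fun n : ℕ => ∫ u in Ioi (1 : ℝ), (f u - f 1) / (u : ℂ) ^ (n + 2))
      (∫ u in Ioi (1 : ℝ), (f u - f 1) / ((u : ℂ) - 1) / (u : ℂ)) := by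
  refine ⟨fun n => integrableOn_Ioi_cpow_of_lt (by simp; linarith [(n.cast_nonneg : (0:ℝ) ≤ n)]) one_pos, ?_⟩
  obtain ⟨L, hL⟩ := ContDiff.lipschitzWith_of_hasCompactSupport hsupp hf (by simp)
  obtain ⟨B, hB⟩ := hf.continuous.bounded_above_of_compact_support hsupp
  have hB0 : 0 ≤ B := (norm_nonneg _).trans (hB 0)
  have hLb : ∀ u : ℝ, 1 < u → ‖f u - f 1‖ ≤ (2 * L + 4 * B) * ((u - 1) / u) := by
    intro u hu
    have h1 : ‖f u - f 1‖ ≤ L * (u - 1) := by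
      have := hL.norm_sub_le u 1
      rwa [Real.norm_of_nonneg (by linarith)] at this
    have h2 : ‖f u - f 1‖ ≤ 2 * B := by
      have := norm_sub_le (f u) (f 1)
      linarith [hB u, hB 1]
    have hL0 : (0:ℝ) ≤ L := L.2
    rw [← mul_div_assoc, le_div_iff₀ (by linarith)]
    rcases le_total u 2 with h | h
    · nlinarith [norm_nonneg (f u - f 1), mul_nonneg hL0 (by linarith : 0 ≤ u - 1), mul_nonneg hB0 (by linarith : 0 ≤ u - 1)]
    · nlinarith [norm_nonneg (f u - f 1), mul_nonneg hL0 (by linarith : 0 ≤ u - 1), mul_nonneg hB0 (by linarith : 0 ≤ u - 2)]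
  have hgeo : ∀ u : ℝ, 1 < u → HasSum (fun n : ℕ => 1 / u ^ (n + 2)) (1 / ((u - 1) * u)) := by
    intro u hu
    have hu0 : 0 < u := by linarith
    have := (hasSum_geometric_of_lt_one (r := u⁻¹) (by positivity) (inv_lt_one_of_one_lt₀ hu)).mul_left (1 / u ^ 2)
    have hu1 : u - 1 ≠ 0 := by linarith
    refine hs_congr this (fun n => ?_) ?_
    · rw [pow_add, inv_pow]; field_simp
    · have : 1 - u⁻¹ = (u - 1) / u := by field_simp
      rw [this]; field_simp
  refine hasSum_integral_of_dominated_convergence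
    (fun n u => ‖f u - f 1‖ * (1 / u ^ (n + 2))) ?_ ?_ ?_ ?_ ?_
  · intro n
    apply Measurable.aestronglyMeasurable
    have := hf.continuous.measurable
    fun_prop
  · intro n
    filter_upwards [ae_restrict_mem measurableSet_Ioi] with u hu
    have hu0 : 0 < u := lt_trans one_pos hu
    rw [norm_div, norm_pow, Complex.norm_of_nonneg hu0.le, mul_one_div]
  · filter_upwards [ae_restrict_mem measurableSet_Ioi] with u hu
    exact (hgeo u hu).summable.mul_left _
  · have hi := (integrableOn_Ioi_rpow_of_lt (a := -2) (by norm_num) (c := 1) one_pos).const_mul (2 * L + 4 * B)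
    have : Integrable (fun u => ‖f u - f 1‖ * (1 / ((u - 1) * u))) (volume.restrict (Ioi 1)) := by
      refine hi.mono' ?_ ?_
      · apply Measurable.aestronglyMeasurable
        have := hf.continuous.measurable
        fun_prop
      · filter_upwards [ae_restrict_mem measurableSet_Ioi] with u hu
        have hu' : 1 < u := hu
        have hu0 : 0 < u := lt_trans one_pos hu
        have hu1 : 0 < u - 1 := by linarith
        rw [Real.norm_of_nonneg (by positivity)]
        calc _ ≤ (2 * L + 4 * B) * ((u - 1) / u) * (1 / ((u - 1) * u)) := by
              gcongr
              exact hLb u hu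
          _ = _ := by
              rw [Real.rpow_neg hu0.le]
              norm_cast
              field_simp
    refine this.congr ?_
    filter_upwards [ae_restrict_mem measurableSet_Ioi] with u hu
    rw [tsum_mul_left, (hgeo u hu).tsum_eq]
  · filter_upwards [ae_restrict_mem measurableSet_Ioi] with u hu
    have := (Complex.hasSum_ofReal.2 (hgeo u hu)).mul_left (f u - f 1)
    refine hs_congrC this (fun n => ?_) ?_
    · push_cast; ring
    · push_cast; rw [mul_one_div, div_div]

lemma realB (f : ℝ → ℂ) (hf : ContDiff ℝ (⊤ : ℕ∞) f) (hsupp : HasCompactSupport f) :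
    HasSum (fun n : ℕ => ∫ u in Ioo (0 : ℝ) 1, (u : ℂ) ^ n * ((u : ℂ) * f u - f 1))
      (∫ u in Ioo (0 : ℝ) 1, ((u : ℂ) * f u - f 1) / (1 - (u : ℂ))) := by
  obtain ⟨L, hL⟩ := ContDiff.lipschitzWith_of_hasCompactSupport (f := fun u : ℝ => (u : ℂ) * f u)
    (n := (⊤ : ℕ∞)) (HasCompactSupport.mul_left (f := fun u : ℝ => (u : ℂ)) hsupp)
    (ContDiff.mul (f := fun u : ℝ => (u : ℂ)) Complex.ofRealCLM.contDiff hf) (by simp)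
  have hLb : ∀ u : ℝ, u < 1 → ‖(u : ℂ) * f u - f 1‖ ≤ L * (1 - u) := by
    intro u hu
    have := hL.norm_sub_le u 1
    rw [Real.norm_eq_abs, abs_of_neg (by linarith)] at this
    simpa using this
  have hgeo : ∀ u : ℝ, u ∈ Ioo (0:ℝ) 1 → HasSum (fun n : ℕ => u ^ n) (1 / (1 - u)) := by
    intro u hu
    simpa using hasSum_geometric_of_lt_one hu.1.le hu.2
  have hm : Measurable (fun u : ℝ => ((u : ℂ) * f u - f 1)) := by
    have := hf.continuous.measurable
    fun_prop
  refine hasSum_integral_of_dominated_convergence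
    (fun n u => ‖(u : ℂ) * f u - f 1‖ * u ^ n) ?_ ?_ ?_ ?_ ?_
  · intro n
    apply Measurable.aestronglyMeasurable
    fun_prop
  · intro n
    filter_upwards [ae_restrict_mem measurableSet_Ioo] with u hu
    rw [norm_mul, norm_pow, Complex.norm_of_nonneg hu.1.le, mul_comm]
  · filter_upwards [ae_restrict_mem measurableSet_Ioo] with u hu
    exact (hgeo u hu).summable.mul_left _
  · have : Integrable (fun u : ℝ => ‖(u : ℂ) * f u - f 1‖ * (1 / (1 - u))) (volume.restrict (Ioo 0 1)) := by
      refine (integrable_const (L : ℝ)).mono' ?_ ?_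
      · apply Measurable.aestronglyMeasurable
        fun_prop
      · filter_upwards [ae_restrict_mem measurableSet_Ioo] with u hu
        have hu1 : 0 < 1 - u := by linarith [hu.2]
        rw [Real.norm_of_nonneg (by positivity), mul_one_div, div_le_iff₀ hu1]
        exact hLb u hu.2
    refine this.congr ?_
    filter_upwards [ae_restrict_mem measurableSet_Ioo] with u hu
    rw [tsum_mul_left, (hgeo u hu).tsum_eq]
  · filter_upwards [ae_restrict_mem measurableSet_Ioo] with u hu
    have := (Complex.hasSum_ofReal.2 (hgeo u hu)).mul_left ((u : ℂ) * f u - f 1)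
    refine hs_congrC this (fun n => ?_) ?_
    · push_cast; ring
    · push_cast; rw [mul_one_div]

lemma sumA (f : ℝ → ℂ) (hf : ContDiff ℝ (⊤ : ℕ∞) f) (hsupp : HasCompactSupport f)
    (hpos : tsupport f ⊆ Set.Ioi 0) (σ : ℝ) (hσ : 0 < σ) (hσ' : σ < 1) :
    Integrable (fun t : ℝ => mellin f ((σ : ℂ) + t * I) *
      ∑' n : ℕ, (1 / ((n : ℂ) + 1) - 1 / ((n : ℂ) + 1 + ((σ : ℂ) + t * I)))) ∧
    (1 / (2 * (Real.pi : ℂ))) * ∫ t : ℝ, mellin f ((σ : ℂ) + t * I) *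
      ∑' n : ℕ, (1 / ((n : ℂ) + 1) - 1 / ((n : ℂ) + 1 + ((σ : ℂ) + t * I)))
      = - ∫ u in Ioi (1 : ℝ), (f u - f 1) / ((u : ℂ) - 1) / (u : ℂ) := by
  have hM := mellin_int f hf hsupp hpos σ
  obtain ⟨h1, h2⟩ := sumlem _ (mellin_cont f hf hsupp hpos σ) (mellin_int_mul f hf hsupp hpos σ 1)
    (fun n t => 1 / ((n : ℂ) + 1) - 1 / ((n : ℂ) + 1 + ((σ : ℂ) + t * I)))
    (by
      intro n
      refine continuous_const.sub (continuous_const.div (by fun_prop) fun t h => ?_)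
      have := congrArg Complex.re h
      simp at this
      linarith [(n.cast_nonneg : (0:ℝ) ≤ n)])
    (by
      intro n t
      refine (qbound n _ (by simpa using hσ)).trans ?_
      gcongr
      refine (norm_add_le _ _).trans ?_
      simp [abs_of_pos hσ, hσ'.le])
  refine ⟨h1, ?_⟩
  obtain ⟨hI, h3⟩ := realA f hf hsupp
  have h4 := h2.mul_left (1 / (2 * (Real.pi : ℂ)))
  refine h4.unique ?_
  refine hs_congrC h3.neg (fun n => ?_) rfl
  have hn : (0:ℝ) ≤ n := n.cast_nonneg
  have e1 := termA f hf hsupp hpos σ hσ (n + 1)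
  have e0 := inv_one f hf hsupp hpos σ
  have hi := intInv _ hM (fun t : ℝ => (n : ℂ) + 1 + ((σ : ℂ) + t * I)) (by fun_prop) σ hσ
    (by intro t; simp; linarith)
  simp_rw [mul_sub]
  rw [integral_sub (hM.mul_const _) hi, integral_mul_const, mul_sub, ← mul_assoc, e0]
  push_cast at e1
  rw [e1]
  have hI' : IntegrableOn (fun u : ℝ => f 1 / (u : ℂ) ^ (n + 2)) (Ioi 1) := by
    refine ((hI n).const_mul (f 1)).congr ?_
    filter_upwards with u
    rw [cpow_neg, div_eq_mul_inv]
    congr 2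
    exact_mod_cast cpow_natCast (u:ℂ) (n+2)
  have hv : ∫ u in Ioi (1:ℝ), f 1 / (u : ℂ) ^ (n + 2) = f 1 * (1 / ((n : ℂ) + 1)) := by
    have : ∀ u : ℝ, f 1 / (u : ℂ) ^ (n + 2) = f 1 * (u : ℂ) ^ (-((n : ℂ) + 2)) := by
      intro u
      rw [cpow_neg, div_eq_mul_inv]
      congr 2
      exact_mod_cast (cpow_natCast (u:ℂ) (n+2)).symm
    simp_rw [this]
    rw [integral_const_mul, integral_Ioi_cpow_of_lt (by simp; linarith) one_pos]
    congr 1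
    have : -((n : ℂ) + 2) + 1 = -((n : ℂ) + 1) := by ring
    rw [this]
    simp only [ofReal_one, one_cpow, neg_div_neg_eq]
  have hfI : IntegrableOn (fun u : ℝ => f u / (u : ℂ) ^ (n + 2)) (Ioi 1) := by
    refine Integrable.mono (hf.continuous.integrable_of_hasCompactSupport (μ := volume) hsupp).integrableOn ?_ ?_
    · apply Measurable.aestronglyMeasurable
      have := hf.continuous.measurable
      fun_prop
    · filter_upwards [ae_restrict_mem measurableSet_Ioi] with u hu
      have hu0 : 0 < u := lt_trans one_pos hu
      rw [norm_div, norm_pow, Complex.norm_of_nonneg hu0.le]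
      exact div_le_self (norm_nonneg _) (one_le_pow₀ (le_of_lt hu))
  simp_rw [sub_div]
  rw [integral_sub hfI hI', hv]
  ring

lemma sumB (f : ℝ → ℂ) (hf : ContDiff ℝ (⊤ : ℕ∞) f) (hsupp : HasCompactSupport f)
    (hpos : tsupport f ⊆ Set.Ioi 0) (σ : ℝ) (hσ : 0 < σ) (hσ' : σ < 1) :
    Integrable (fun t : ℝ => mellin f ((σ : ℂ) + t * I) *
      ∑' n : ℕ, (1 / ((n : ℂ) + 1) - 1 / ((n : ℂ) + 1 + 1 - ((σ : ℂ) + t * I)))) ∧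
    (1 / (2 * (Real.pi : ℂ))) * ∫ t : ℝ, mellin f ((σ : ℂ) + t * I) *
      ∑' n : ℕ, (1 / ((n : ℂ) + 1) - 1 / ((n : ℂ) + 1 + 1 - ((σ : ℂ) + t * I)))
      = - ∫ u in Ioo (0 : ℝ) 1, ((u : ℂ) * f u - f 1) / (1 - (u : ℂ)) := by
  have hM := mellin_int f hf hsupp hpos σ
  obtain ⟨h1, h2⟩ := sumlem _ (mellin_cont f hf hsupp hpos σ) (mellin_int_mul f hf hsupp hpos σ 1)
    (fun n t => 1 / ((n : ℂ) + 1) - 1 / ((n : ℂ) + 1 + 1 - ((σ : ℂ) + t * I)))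
    (by
      intro n
      refine continuous_const.sub (continuous_const.div (by fun_prop) fun t h => ?_)
      have := congrArg Complex.re h
      simp at this
      linarith [(n.cast_nonneg : (0:ℝ) ≤ n)])
    (by
      intro n t
      rw [add_sub_assoc]
      refine (qbound n _ (by simpa using hσ')).trans ?_
      gcongr
      have : (1 : ℂ) - (σ + t * I) = ((1 - σ : ℝ) : ℂ) - t * I := by push_cast; ring
      rw [this]
      refine (norm_sub_le _ _).trans ?_
      rw [Complex.norm_of_nonneg (by linarith)]
      simp [hσ.le])
  refine ⟨h1, ?_⟩
  have h3 := realB f hf hsupp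
  have h4 := h2.mul_left (1 / (2 * (Real.pi : ℂ)))
  refine h4.unique ?_
  refine hs_congrC h3.neg (fun n => ?_) rfl
  have hn : (0:ℝ) ≤ n := n.cast_nonneg
  have e1 := termB f hf hsupp hpos σ hσ' (n + 1)
  have e0 := inv_one f hf hsupp hpos σ
  have hi := intInv _ hM (fun t : ℝ => (n : ℂ) + 1 + 1 - ((σ : ℂ) + t * I)) (by fun_prop) (1 - σ)
    (by linarith) (by intro t; simp; linarith)
  simp_rw [mul_sub]
  rw [integral_sub (hM.mul_const _) hi, integral_mul_const, mul_sub, ← mul_assoc, e0]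
  push_cast at e1
  rw [e1]
  have hIc : ∀ g : ℝ → ℂ, Continuous g → IntegrableOn g (Ioo 0 1) := fun g hg =>
    (hg.integrableOn_Icc (a := 0) (b := 1)).mono_set Ioo_subset_Icc_self
  have hv : ∫ u in Ioo (0:ℝ) 1, (u : ℂ) ^ n * f 1 = f 1 * (1 / ((n : ℂ) + 1)) := by
    rw [integral_mul_const, ← integral_Ioc_eq_integral_Ioo,
      ← intervalIntegral.integral_of_le zero_le_one, mul_comm]
    congr 1
    have := integral_pow (a := 0) (b := 1) n
    have h := congrArg (fun x : ℝ => (x : ℂ)) this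
    simp only [← intervalIntegral.integral_ofReal] at h
    push_cast at h
    rw [h]; simp
  have hc := hf.continuous
  rw [integral_sub (hIc _ (by fun_prop)) (hIc _ (by fun_prop)), hv]
  simp_rw [pow_succ, mul_assoc]
  ring
end CPlace

/-- the complex-place local term of the explicit formula: for smooth `f`
compactly supported in `(0,∞)` and `0 < σ < 1`,
`−2(γ + log 2π) f(1) − ∫₁^∞ f(u) du/u − ∫₁^∞ (f(u)−f(1))/(u−1) du/u − ∫₀¹ f(u) du
 − ∫₀¹ (u f(u) − f(1))/(1−u) du
 = (1/2πi) ∫_{(σ)} M^s(f) (−2(γ+log 2π) − 1/s − 1/(1−s)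
     + ∑_{n≥1}(1/n − 1/(n+s)) + ∑_{n≥1}(1/n − 1/(n+1−s))) ds`. -/
theorem complex_place_infinitesimal_generator (f : ℝ → ℂ)
    (hf : ContDiff ℝ (⊤ : ℕ∞) f) (hsupp : HasCompactSupport f) (hpos : tsupport f ⊆ Set.Ioi 0)
    (σ : ℝ) (hσ : 0 < σ) (hσ' : σ < 1) :
    -2 * ((Real.eulerMascheroniConstant : ℂ) + (Real.log (2 * Real.pi) : ℂ)) * f 1
      - (∫ u in Set.Ioi (1 : ℝ), f u / (u : ℂ))
      - (∫ u in Set.Ioi (1 : ℝ), (f u - f 1) / ((u : ℂ) - 1) / (u : ℂ))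
      - (∫ u in Set.Ioo (0 : ℝ) 1, f u)
      - (∫ u in Set.Ioo (0 : ℝ) 1, ((u : ℂ) * f u - f 1) / (1 - (u : ℂ)))
    = (1 / (2 * (Real.pi : ℂ) * I)) * ∫ t : ℝ,
        mellin f ((σ : ℂ) + t * I) *
          (-2 * ((Real.eulerMascheroniConstant : ℂ) + (Real.log (2 * Real.pi) : ℂ))
            - 1 / ((σ : ℂ) + t * I) - 1 / (1 - ((σ : ℂ) + t * I))
            + (∑' n : ℕ, (1 / ((n : ℂ) + 1) - 1 / ((n : ℂ) + 1 + ((σ : ℂ) + t * I))))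
            + (∑' n : ℕ, (1 / ((n : ℂ) + 1) - 1 / ((n : ℂ) + 1 + 1 - ((σ : ℂ) + t * I))))) * I := by
  have hM := CPlace.mellin_int f hf hsupp hpos σ
  obtain ⟨iA, eA⟩ := CPlace.sumA f hf hsupp hpos σ hσ hσ'
  obtain ⟨iB, eB⟩ := CPlace.sumB f hf hsupp hpos σ hσ hσ'
  have e0 := CPlace.inv_one f hf hsupp hpos σ
  have e1 := CPlace.termA f hf hsupp hpos σ hσ 0
  have e2 := CPlace.termB f hf hsupp hpos σ hσ' 0
  have i1 := CPlace.intInv _ hM (fun t : ℝ => ((σ : ℂ) + t * I)) (by fun_prop) σ hσ (by intro t; simp)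
  have i2 := CPlace.intInv _ hM (fun t : ℝ => 1 - ((σ : ℂ) + t * I)) (by fun_prop) (1 - σ)
    (by linarith) (by intro t; simp)
  simp only [Nat.cast_zero, zero_add, pow_one, pow_zero, one_mul] at e1 e2
  rw [integral_mul_const]
  simp_rw [mul_add, mul_sub]
  have i0 := hM.mul_const
    (-2 * (Real.eulerMascheroniConstant : ℂ) + -2 * (Real.log (2 * Real.pi) : ℂ))
  simp_rw [← mul_add] at i0 ⊢
  rw [CPlace.split_int i0 i1 i2 iA iB, integral_mul_const]
  have hpi : (1 / (2 * (Real.pi : ℂ) * I)) = (1 / (2 * (Real.pi : ℂ))) * (1 / I) := by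
    rw [one_div_mul_one_div]
  have key : ∀ X : ℂ, (1 / (2 * (Real.pi : ℂ) * I)) * (X * I) = (1 / (2 * (Real.pi : ℂ))) * X := by
    intro X
    rw [hpi]
    field_simp
  rw [key]
  linear_combination (-2 * ((Real.eulerMascheroniConstant : ℂ) + (Real.log (2 * Real.pi) : ℂ))) * (-e0)
    + e1 + e2 - eA - eB
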